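/- Let n ≥ 1 and s ∈ (0,1). Define u : ℝⁿ → ℝ by u(x) = c(n,s)·(1−|x|²)^{s−1} for |x| < 1 and u(x) = 0 for |x| ≥ 1. Then u satisfies the s-mean value property on the open unit ball B: for every x ∈ B and every 0 < r < 1−|x|, u(x) = ∫_{ℝⁿ∖B_r(x)} η_r^{(s)}(y−x)·u(y) dy, with the integral absolutely convergent. -/

import Mathlib

open MeasureTheory Real Set

/-- The normalizing constant `c(n,s) = Γ(n/2)·sin(πs)/π^{1+n/2}`. -/
noncomputable def cns (n : ℕ) (s : ℝ) : ℝ :=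
  Real.Gamma ((n : ℝ) / 2) * Real.sin (Real.pi * s) / Real.pi ^ ((1 : ℝ) + (n : ℝ) / 2)

/-- The kernel `η_r^{(s)}(y) = c(n,s)·r^{2s}/(|y|^n·(|y|²−r²)^s)` for `|y| > r`, `0` otherwise. -/
noncomputable def eta (n : ℕ) (s r : ℝ) (y : EuclideanSpace ℝ (Fin n)) : ℝ :=
  if r < ‖y‖ then cns n s * r ^ (2 * s) / (‖y‖ ^ n * (‖y‖ ^ 2 - r ^ 2) ^ s) else 0

/-- The function `u(x) = c(n,s)·(1−|x|²)^{s−1}` for `|x| < 1`, `0` for `|x| ≥ 1`. -/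
noncomputable def uOneMinusS (n : ℕ) (s : ℝ) (x : EuclideanSpace ℝ (Fin n)) : ℝ :=
  if ‖x‖ < 1 then cns n s * (1 - ‖x‖ ^ 2) ^ (s - 1) else 0

lemma beta_half_line (s : ℝ) (hs : s ∈ Set.Ioo (0 : ℝ) 1) :
    ∫⁻ w in Ioi (0:ℝ), ENNReal.ofReal (w ^ (s - 1) / (1 + w)) =
      ENNReal.ofReal (π / Real.sin (π * s)) := by
  obtain ⟨hs0, hs1⟩ := hs
  have himg : (fun v : ℝ => v / (1 - v)) '' Ioo 0 1 = Ioi 0 := by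
    ext w
    simp only [mem_image, mem_Ioo, mem_Ioi]
    constructor
    · rintro ⟨v, ⟨h0, h1⟩, rfl⟩
      exact div_pos h0 (by linarith)
    · intro hw
      refine ⟨w / (1 + w), ⟨by positivity, ?_⟩, ?_⟩
      · rw [div_lt_one (by linarith)]; linarith
      · have : (1:ℝ) + w ≠ 0 := by positivity
        have h2 : 1 - w / (1 + w) = 1 / (1 + w) := by field_simp; ring
        rw [h2]; field_simp
  have hder : ∀ v ∈ Ioo (0:ℝ) 1,
      HasDerivWithinAt (fun v : ℝ => v / (1 - v)) (1 / (1 - v) ^ 2) (Ioo 0 1) v := by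
    intro v hv
    have h1 : (1:ℝ) - v ≠ 0 := by linarith [hv.2]
    have := ((hasDerivAt_id v).div ((hasDerivAt_const v (1:ℝ)).sub (hasDerivAt_id v)) h1)
    refine this.hasDerivWithinAt.congr_deriv ?_
    simp
  have hinj : InjOn (fun v : ℝ => v / (1 - v)) (Ioo 0 1) := by
    intro a ha b hb h
    have h1 : (1:ℝ) - a ≠ 0 := by linarith [ha.2]
    have h2 : (1:ℝ) - b ≠ 0 := by linarith [hb.2]
    simp only at h
    rw [div_eq_div_iff h1 h2] at h
    linarith
  have hB : 0 < ProbabilityTheory.beta s (1 - s) :=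
    ProbabilityTheory.beta_pos hs0 (by linarith)
  have hBe : ProbabilityTheory.beta s (1 - s) = π / Real.sin (π * s) := by
    rw [ProbabilityTheory.beta, Real.Gamma_mul_Gamma_one_sub]
    simp
  rw [← himg, lintegral_image_eq_lintegral_abs_deriv_mul measurableSet_Ioo hder hinj, ← hBe]
  have h1 := ProbabilityTheory.lintegral_betaPDF_eq_one hs0 (sub_pos.2 hs1)
  rw [ProbabilityTheory.lintegral_betaPDF] at h1
  have h2 : ∀ v ∈ Ioo (0:ℝ) 1, ENNReal.ofReal |1 / (1 - v) ^ 2| *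
      ENNReal.ofReal ((v / (1 - v)) ^ (s - 1) / (1 + v / (1 - v))) =
      ENNReal.ofReal (ProbabilityTheory.beta s (1 - s)) *
       ENNReal.ofReal (1 / ProbabilityTheory.beta s (1 - s) * v ^ (s - 1) * (1 - v) ^ (1 - s - 1)) := by
    intro v hv
    have hv1 : 0 < 1 - v := by linarith [hv.2]
    rw [← ENNReal.ofReal_mul (abs_nonneg _), ← ENNReal.ofReal_mul hB.le]
    congr 1
    rw [abs_of_pos (by positivity), Real.div_rpow hv.1.le hv1.le]
    have e1 : 1 + v / (1 - v) = 1 / (1 - v) := by field_simp; ring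
    rw [e1]
    have e2 : (1 - v) ^ (1 - s - 1) = ((1 - v) ^ (s - 1))⁻¹ * (1 - v)⁻¹ := by
      rw [← Real.rpow_neg hv1.le, ← Real.rpow_neg_one, ← Real.rpow_add hv1]
      congr 1; ring
    rw [e2]
    have : 0 < (1 - v) ^ (s - 1) := Real.rpow_pos_of_pos hv1 _
    field_simp
  rw [setLIntegral_congr_fun measurableSet_Ioo h2, lintegral_const_mul', h1, mul_one]
  exact ENNReal.ofReal_ne_top

/-- the square root of the discriminant -/
noncomputable def SS (r P p w : ℝ) : ℝ :=
  √((r^2*p)^2 + (w*P + r^2) * (P*r^2*(1+w)))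

lemma SS_gt (r P p w : ℝ) (hr : 0 < r) (hP : 0 < P) (hw : 0 < w) :
    |r^2*p| < SS r P p w := by
  rw [SS, ← Real.sqrt_sq_eq_abs]
  apply Real.sqrt_lt_sqrt (sq_nonneg _)
  have : 0 < (w*P + r^2) * (P*r^2*(1+w)) := by positivity
  linarith

lemma SS_sq (r P p w : ℝ) (hP : 0 < P) (hw : 0 < w) :
    SS r P p w ^ 2 = (r^2*p)^2 + (w*P + r^2) * (P*r^2*(1+w)) := by
  rw [SS, Real.sq_sqrt]; positivity

lemma oneD (s r P p : ℝ) (hr : 0 < r) (hP : 0 < P) (h : r^2 + 2*p*r < P) :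
    ∫⁻ ρ in {ρ : ℝ | r < ρ ∧ 0 < P - 2*p*ρ - ρ^2},
      ENNReal.ofReal (r^(2*s) / (ρ * (ρ^2 - r^2)^s) * (P - 2*p*ρ - ρ^2)^(s-1)) =
    ∫⁻ w in Ioi (0:ℝ), ENNReal.ofReal (P^(s-1) * (w^(s-1)/(1+w)) *
      ((SS r P p w + r^2*p) / (2 * SS r P p w))) := by
  set D : Set ℝ := {ρ : ℝ | r < ρ ∧ 0 < P - 2*p*ρ - ρ^2} with hD
  set W : ℝ → ℝ := fun ρ => r^2 * (P - 2*p*ρ - ρ^2) / (P * (ρ^2 - r^2)) with hW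
  have hDm : MeasurableSet D := by
    apply IsOpen.measurableSet
    have c : Continuous fun ρ : ℝ => P - 2*p*ρ - ρ^2 := by fun_prop
    exact (isOpen_lt continuous_const continuous_id).inter (isOpen_lt continuous_const c)
  have hpos : ∀ ρ ∈ D, 0 < ρ ∧ 0 < ρ^2 - r^2 ∧ 0 < P - 2*p*ρ - ρ^2 ∧ 0 < W ρ := by
    intro ρ hρ
    have h1 : r < ρ := hρ.1
    have h0 : 0 < ρ := hr.trans h1
    have h2 : 0 < ρ^2 - r^2 := by nlinarith
    have h3 := hρ.2
    exact ⟨h0, h2, h3, by simp only [hW]; positivity⟩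
  have hquad : ∀ ρ ∈ D, W ρ * P * (ρ^2 - r^2) = r^2 * (P - 2*p*ρ - ρ^2) := by
    intro ρ hρ
    obtain ⟨h0, h2, h3, -⟩ := hpos ρ hρ
    simp only [hW]; field_simp
  have himg : W '' D = Ioi 0 := by
    ext w
    simp only [mem_image, mem_Ioi]
    constructor
    · rintro ⟨ρ, hρ, rfl⟩
      exact (hpos ρ hρ).2.2.2
    · intro hw
      have hS := SS_gt r P p w hr hP hw
      have hS2 := SS_sq r P p w hP hw
      have hS' := le_abs_self (r^2*p)
      set S := SS r P p w
      set A := w*P + r^2 with hA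
      have hA0 : 0 < A := by positivity
      set t := (S - r^2*p)/A with ht
      have ht0 : 0 < t := div_pos (by linarith) hA0
      have htA : A * t = S - r^2*p := by rw [ht]; field_simp
      have hF : A * t^2 + 2*r^2*p*t = P*r^2*(1+w) := by
        have : A * (A * t^2 + 2*r^2*p*t) = A * (P*r^2*(1+w)) := by
          have : (A*t + r^2*p)^2 = S^2 := by rw [htA]; ring
          nlinarith
        exact mul_left_cancel₀ hA0.ne' this
      have hFr : A * r^2 + 2*r^2*p*r < P*r^2*(1+w) := by
        have : 0 < r^2 * (P - (r^2 + 2*p*r)) := by apply mul_pos; positivity; linarith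
        rw [hA]; nlinarith
      have hpos2 : 0 < A * t + 2*r^2*p := by
        have : 0 < t * (A * t + 2*r^2*p) := by
          have : 0 < P*r^2*(1+w) := by positivity
          nlinarith
        exact (pos_iff_pos_of_mul_pos this).1 ht0
      have htr : r < t := by
        by_contra hcon
        push Not at hcon
        have : 0 ≤ (r - t) * (A * t + 2*r^2*p + A * r) :=
          mul_nonneg (by linarith) (by positivity)
        nlinarith
      have h2 : 0 < t^2 - r^2 := by nlinarith
      have hq : w * P * (t^2 - r^2) = r^2 * (P - 2*p*t - t^2) := by
        rw [hA] at hF; nlinarith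
      have h3 : 0 < P - 2*p*t - t^2 := by
        have : 0 < r^2 * (P - 2*p*t - t^2) := by rw [← hq]; positivity
        exact (pos_iff_pos_of_mul_pos this).1 (by positivity)
      refine ⟨t, ⟨htr, h3⟩, ?_⟩
      simp only [hW]
      rw [← hq]; field_simp
  have hinj : InjOn W D := by
    intro a ha b hb hab
    have qa := hquad a ha
    have qb := hquad b hb
    obtain ⟨a0, a2, a3, aW⟩ := hpos a ha
    obtain ⟨b0, b2, b3, bW⟩ := hpos b hb
    rw [← hab] at qb
    set w := W a
    have ha' : 0 < (w*P + r^2) * a + 2*r^2*p := by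
      have : 0 < a * ((w*P + r^2) * a + 2*r^2*p) := by
        have : 0 < P*r^2*(1+w) := by positivity
        nlinarith
      exact (pos_iff_pos_of_mul_pos this).1 a0
    have hz : (a - b) * ((w*P + r^2) * a + 2*r^2*p + (w*P+r^2)*b) = 0 := by linarith
    rcases mul_eq_zero.1 hz with h | h
    · linarith
    · exfalso
      have : 0 < (w*P+r^2)*b := by positivity
      linarith
  have hder : ∀ ρ ∈ D, HasDerivWithinAt W
      (-(2*r^2/P*(ρ*P - p*(ρ^2+r^2) - ρ*r^2)/(ρ^2-r^2)^2)) D ρ := by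
    intro ρ hρ
    obtain ⟨h0, h2, h3, -⟩ := hpos ρ hρ
    have d1 : HasDerivAt (fun ρ : ℝ => r^2 * (P - 2*p*ρ - ρ^2)) (r^2 * (-(2*p) - 2*ρ)) ρ := by
      have := ((((hasDerivAt_id ρ).const_mul (2*p)).const_sub P).sub (hasDerivAt_pow 2 ρ)).const_mul (r^2)
      refine this.congr_deriv ?_
      simp
    have d2 : HasDerivAt (fun ρ : ℝ => P * (ρ^2 - r^2)) (P * (2*ρ)) ρ := by
      have := ((hasDerivAt_pow 2 ρ).sub_const (r^2)).const_mul P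
      refine this.congr_deriv ?_
      simp
    have := d1.div d2 (by positivity)
    refine this.hasDerivWithinAt.congr_deriv ?_
    field_simp
    ring
  rw [← himg, lintegral_image_eq_lintegral_abs_deriv_mul hDm hder hinj]
  refine setLIntegral_congr_fun hDm ?_
  intro ρ hρ
  obtain ⟨h0, h2, h3, hw⟩ := hpos ρ hρ
  have q := hquad ρ hρ
  have hρr : r < ρ := hρ.1
  have hbr : 0 < ρ*P - p*(ρ^2+r^2) - ρ*r^2 := by
    rcases le_or_gt 0 p with hp | hp
    · have a1 : 0 < ρ * (P - 2*p*ρ - ρ^2) := by positivity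
      have a2 : 0 < (p+ρ)*(ρ^2-r^2) := by positivity
      nlinarith
    · have a1 : 0 < ρ * (P - (r^2+2*p*r)) := mul_pos h0 (by linarith)
      have a2 : 0 ≤ -p * (ρ-r)^2 := mul_nonneg (by linarith) (sq_nonneg _)
      nlinarith
  have hS := SS_gt r P p (W ρ) hr hP hw
  have hS2 := SS_sq r P p (W ρ) hP hw
  have hSpos : 0 < SS r P p (W ρ) := lt_of_le_of_lt (abs_nonneg _) hS
  have hS1 : -(r^2*p) < SS r P p (W ρ) := (neg_le_abs _).trans_lt hS
  simp only
  rw [← ENNReal.ofReal_mul (abs_nonneg _)]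
  congr 1
  rw [abs_neg, abs_of_pos (by positivity)]
  set w := W ρ with hwdef
  set S := SS r P p w
  -- value of the square root
  have hSval : S = (w*P + r^2)*ρ + r^2*p := by
    have hge : 0 < (w*P + r^2)*ρ + r^2*p := by
      have e : ((w*P + r^2)*ρ + r^2*p) * (ρ^2-r^2) = r^2*(ρ*P - p*(ρ^2+r^2) - ρ*r^2) := by
        linear_combination ρ * q
      have : 0 < ((w*P + r^2)*ρ + r^2*p) * (ρ^2-r^2) := by rw [e]; positivity
      exact (pos_iff_pos_of_mul_pos this).2 h2
    have : S^2 = ((w*P + r^2)*ρ + r^2*p)^2 := by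
      rw [hS2]; linear_combination (-(w*P+r^2)) * q
    exact (pow_left_inj₀ hSpos.le hge.le two_ne_zero).1 this
  have hSe : S * (ρ^2-r^2) = r^2*(ρ*P - p*(ρ^2+r^2) - ρ*r^2) := by
    rw [hSval]; linear_combination ρ * q
  have hSp : (S + r^2*p) * ρ = P*r^2*(1+w) := by
    rw [hSval]; linear_combination q
  have hQ : P - 2*p*ρ - ρ^2 = P * w * (ρ^2-r^2) / r^2 := by
    field_simp; linarith
  have hrs : r^(2*s) = (r^2)^s := by
    rw [← Real.rpow_natCast, ← Real.rpow_mul hr.le]; norm_num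
  have hr2 : 0 < r^2 := by positivity
  rw [hQ, hrs, Real.div_rpow (by positivity) hr2.le, Real.mul_rpow (by positivity) h2.le,
    Real.mul_rpow hP.le hw.le, Real.rpow_sub_one h2.ne', Real.rpow_sub_one hr2.ne']
  have e1 : S + r^2*p = P*r^2*(1+w)/ρ := by rw [← hSp]; field_simp
  have e2 : ρ*P - p*(ρ^2+r^2) - ρ*r^2 = S * (ρ^2-r^2) / r^2 := by rw [hSe]; field_simp
  rw [e1, e2]
  have g1 : 0 < (r^2)^s := Real.rpow_pos_of_pos hr2 _
  have g2 : 0 < (ρ^2-r^2)^s := Real.rpow_pos_of_pos h2 _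
  generalize (r^2)^s = x1 at *
  generalize (ρ^2-r^2)^s = x2 at *
  generalize w^(s-1) = x3 at *
  generalize P^(s-1) = x4 at *
  generalize ρ^2-r^2 = x5 at *
  clear_value S w
  field_simp

lemma oneD_sum (s r P p : ℝ) (hs : s ∈ Set.Ioo (0 : ℝ) 1) (hr : 0 < r) (hP : 0 < P)
    (h : r^2 + 2*p*r < P) (h' : r^2 + 2*(-p)*r < P) :
    (∫⁻ ρ in {ρ : ℝ | r < ρ ∧ 0 < P - 2*p*ρ - ρ^2},
      ENNReal.ofReal (r^(2*s) / (ρ * (ρ^2 - r^2)^s) * (P - 2*p*ρ - ρ^2)^(s-1))) +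
    (∫⁻ ρ in {ρ : ℝ | r < ρ ∧ 0 < P - 2*(-p)*ρ - ρ^2},
      ENNReal.ofReal (r^(2*s) / (ρ * (ρ^2 - r^2)^s) * (P - 2*(-p)*ρ - ρ^2)^(s-1))) =
    ENNReal.ofReal (P^(s-1) * (π / Real.sin (π * s))) := by
  rw [oneD s r P p hr hP h, oneD s r P (-p) hr hP h', ← lintegral_add_left]
  · have hPs : 0 ≤ P^(s-1) := by positivity
    rw [ENNReal.ofReal_mul hPs, ← beta_half_line s hs,
      ← lintegral_const_mul' _ _ ENNReal.ofReal_ne_top]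
    refine setLIntegral_congr_fun measurableSet_Ioi ?_
    intro w hw
    have hw : 0 < w := hw
    have hS := SS_gt r P p w hr hP hw
    have hneg : SS r P (-p) w = SS r P p w := by
      unfold SS; congr 1; ring
    have hSpos : 0 < SS r P p w := lt_of_le_of_lt (abs_nonneg _) hS
    have a1 := le_abs_self (r^2*p)
    have a2 := neg_le_abs (r^2*p)
    simp only
    rw [hneg, ← ENNReal.ofReal_mul hPs, ← ENNReal.ofReal_add]
    · congr 1
      field_simp
      ring
    · apply mul_nonneg (by positivity)
      apply div_nonneg _ (by positivity)
      linarith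
    · apply mul_nonneg (by positivity)
      apply div_nonneg _ (by positivity)
      linarith
  · unfold SS
    fun_prop

lemma polar_lintegral {n : ℕ} (hn : 1 ≤ n) (f : EuclideanSpace ℝ (Fin n) → ENNReal)
    (hf : Measurable f) :
    ∫⁻ z, f z = ∫⁻ ω : Metric.sphere (0 : EuclideanSpace ℝ (Fin n)) 1,
      (∫⁻ ρ in Ioi (0:ℝ), ENNReal.ofReal (ρ^(n-1)) * f (ρ • (ω : EuclideanSpace ℝ (Fin n))))
        ∂(volume : Measure (EuclideanSpace ℝ (Fin n))).toSphere := by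
  have : Nonempty (Fin n) := ⟨⟨0, hn⟩⟩
  have mp := (volume : Measure (EuclideanSpace ℝ (Fin n))).measurePreserving_homeomorphUnitSphereProd
  have hg : Measurable (fun q : Metric.sphere (0 : EuclideanSpace ℝ (Fin n)) 1 × Ioi (0:ℝ) =>
      f ((q.2 : ℝ) • (q.1 : EuclideanSpace ℝ (Fin n)))) := by
    apply hf.comp; fun_prop
  conv_lhs => rw [← restrict_compl_singleton (μ := volume) (0 : EuclideanSpace ℝ (Fin n))]
  rw [← lintegral_subtype_comap (measurableSet_singleton _).compl]
  have := mp.lintegral_comp hg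
  have e : ∀ a : ({0}ᶜ : Set (EuclideanSpace ℝ (Fin n))),
    ((homeomorphUnitSphereProd _ a).2 : ℝ) • ((homeomorphUnitSphereProd _ a).1 : EuclideanSpace ℝ (Fin n)) = a := by
    intro a
    have ha : ‖(a : EuclideanSpace ℝ (Fin n))‖ ≠ 0 := norm_ne_zero_iff.2 a.2
    simp [smul_smul, ha]
  simp only [e] at this
  rw [this, lintegral_prod _ hg.aemeasurable]
  refine lintegral_congr fun ω => ?_
  have hm : Measurable (fun ρ : Ioi (0:ℝ) => f ((ρ : ℝ) • (ω : EuclideanSpace ℝ (Fin n)))) := by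
    apply hf.comp; fun_prop
  simp only
  rw [Measure.volumeIoiPow, lintegral_withDensity_eq_lintegral_mul _ (by fun_prop) hm]
  simp only [Pi.mul_apply, finrank_euclideanSpace_fin]
  rw [lintegral_subtype_comap measurableSet_Ioi
    (fun ρ : ℝ => ENNReal.ofReal (ρ^(n-1)) * f (ρ • (ω : EuclideanSpace ℝ (Fin n))))]

lemma cns_pos (n : ℕ) (hn : 1 ≤ n) (s : ℝ) (hs : s ∈ Set.Ioo (0 : ℝ) 1) : 0 < cns n s := by
  have h1 : 0 < Real.Gamma ((n:ℝ)/2) := by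
    apply Real.Gamma_pos_of_pos
    have : (0:ℝ) < n := by exact_mod_cast hn
    positivity
  have h2 : 0 < Real.sin (π * s) := by
    apply Real.sin_pos_of_pos_of_lt_pi
    · exact mul_pos Real.pi_pos hs.1
    · nlinarith [Real.pi_pos, hs.2]
  unfold cns
  positivity

lemma eta_meas (n : ℕ) (s r : ℝ) : Measurable (eta n s r) := by
  unfold eta
  refine Measurable.ite (measurableSet_lt measurable_const measurable_norm) ?_ measurable_const
  fun_prop

lemma u_meas (n : ℕ) (s : ℝ) : Measurable (uOneMinusS n s) := by
  unfold uOneMinusS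
  refine Measurable.ite (measurableSet_lt measurable_norm measurable_const) ?_ measurable_const
  fun_prop

lemma eta_nonneg (n : ℕ) (hn : 1 ≤ n) (s r : ℝ) (hs : s ∈ Set.Ioo (0 : ℝ) 1) (hr : 0 < r)
    (z : EuclideanSpace ℝ (Fin n)) : 0 ≤ eta n s r z := by
  have := cns_pos n hn s hs
  unfold eta
  split_ifs with h
  · have h2 : 0 ≤ ‖z‖^2 - r^2 := by nlinarith
    positivity
  · exact le_rfl

lemma u_nonneg (n : ℕ) (hn : 1 ≤ n) (s : ℝ) (hs : s ∈ Set.Ioo (0 : ℝ) 1)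
    (z : EuclideanSpace ℝ (Fin n)) : 0 ≤ uOneMinusS n s z := by
  have := cns_pos n hn s hs
  unfold uOneMinusS
  split_ifs with h
  · have h2 : 0 ≤ 1 - ‖z‖^2 := by nlinarith [norm_nonneg z]
    positivity
  · exact le_rfl

lemma radial (n : ℕ) (hn : 1 ≤ n) (s : ℝ)
    (x ω : EuclideanSpace ℝ (Fin n)) (hω : ‖ω‖ = 1) (r : ℝ) (hr : 0 < r) :
    ∫⁻ ρ in Ioi (0:ℝ), ENNReal.ofReal (ρ^(n-1)) *
      ENNReal.ofReal (eta n s r (ρ • ω) * uOneMinusS n s (x + ρ • ω)) =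
    ENNReal.ofReal (cns n s ^ 2) *
    ∫⁻ ρ in {ρ : ℝ | r < ρ ∧ 0 < (1 - ‖x‖^2) - 2*(inner ℝ x ω)*ρ - ρ^2},
      ENNReal.ofReal (r^(2*s) / (ρ * (ρ^2 - r^2)^s) *
        ((1 - ‖x‖^2) - 2*(inner ℝ x ω)*ρ - ρ^2)^(s-1)) := by
  set p := inner ℝ x ω
  have hDm : MeasurableSet {ρ : ℝ | r < ρ ∧ 0 < (1 - ‖x‖^2) - 2*p*ρ - ρ^2} := by
    apply IsOpen.measurableSet
    have c : Continuous fun ρ : ℝ => (1 - ‖x‖^2) - 2*p*ρ - ρ^2 := by fun_prop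
    exact (isOpen_lt continuous_const continuous_id).inter (isOpen_lt continuous_const c)
  rw [← lintegral_const_mul' _ _ ENNReal.ofReal_ne_top, ← lintegral_indicator measurableSet_Ioi,
    ← lintegral_indicator hDm]
  refine lintegral_congr fun ρ => ?_
  by_cases hρ : 0 < ρ
  swap
  · rw [indicator_of_notMem (by simpa using hρ), indicator_of_notMem]
    rintro ⟨h1, -⟩
    linarith
  rw [indicator_of_mem (by simpa using hρ)]
  have hn1 : ‖ρ • ω‖ = ρ := by rw [norm_smul, hω, mul_one, Real.norm_of_nonneg hρ.le]
  have hn2 : ‖x + ρ • ω‖^2 = ‖x‖^2 + 2*p*ρ + ρ^2 := by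
    rw [norm_add_sq_real, hn1, inner_smul_right]; ring
  have hlt : ‖x + ρ • ω‖ < 1 ↔ 0 < (1 - ‖x‖^2) - 2*p*ρ - ρ^2 := by
    rw [← sq_lt_one_iff₀ (norm_nonneg _), hn2]
    constructor <;> intro h <;> linarith
  rw [eta, uOneMinusS, hn1, hn2]
  simp only [hlt]
  by_cases h1 : r < ρ
  swap
  · rw [indicator_of_notMem (fun h => h1 h.1)]; simp [h1]
  by_cases h2 : 0 < (1 - ‖x‖^2) - 2*p*ρ - ρ^2
  swap
  · rw [indicator_of_notMem (fun h => h2 h.2)]; simp [h2]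
  rw [indicator_of_mem (show ρ ∈ {ρ : ℝ | r < ρ ∧ 0 < (1 - ‖x‖^2) - 2*p*ρ - ρ^2} from ⟨h1, h2⟩),
    if_pos h1, if_pos h2, ← ENNReal.ofReal_mul (by positivity), ← ENNReal.ofReal_mul (by positivity)]
  congr 1
  have e : 1 - (‖x‖^2 + 2*p*ρ + ρ^2) = (1 - ‖x‖^2) - 2*p*ρ - ρ^2 := by ring
  rw [e]
  have e2 : ρ^n = ρ^(n-1) * ρ := by rw [← pow_succ]; congr 1; omega
  rw [e2]
  have h3 : 0 < ρ^2 - r^2 := by nlinarith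
  have h4 : 0 < (ρ^2 - r^2)^s := Real.rpow_pos_of_pos h3 _
  field_simp

lemma lint_value (n : ℕ) (hn : 1 ≤ n) (s : ℝ)
    (hs : s ∈ Set.Ioo (0 : ℝ) 1)
    (x : EuclideanSpace ℝ (Fin n)) (hx : ‖x‖ < 1)
    (r : ℝ) (hr : 0 < r) (hr1 : r < 1 - ‖x‖) :
    ∫⁻ z, ENNReal.ofReal (eta n s r z * uOneMinusS n s (x + z)) =
      ENNReal.ofReal (uOneMinusS n s x) := by
  have hc := cns_pos n hn s hs
  have hP : 0 < 1 - ‖x‖^2 := by nlinarith [norm_nonneg x]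
  set f : EuclideanSpace ℝ (Fin n) → ENNReal :=
    fun z => ENNReal.ofReal (eta n s r z * uOneMinusS n s (x + z)) with hf
  have hfm : Measurable f := by
    apply Measurable.ennreal_ofReal
    exact (eta_meas n s r).mul ((u_meas n s).comp (measurable_const_add x))
  have hfm' : Measurable (fun z => f (-z)) := hfm.comp measurable_neg
  have h2 : 2 * ∫⁻ z, f z = ∫⁻ z, (f z + f (-z)) := by
    rw [lintegral_add_left hfm, lintegral_neg_eq_self (μ := volume) f, two_mul]
  have hinner : ∀ ω : Metric.sphere (0 : EuclideanSpace ℝ (Fin n)) 1,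
      (∫⁻ ρ in Ioi (0:ℝ), ENNReal.ofReal (ρ^(n-1)) *
        (f (ρ • (ω : EuclideanSpace ℝ (Fin n))) + f (-(ρ • (ω : EuclideanSpace ℝ (Fin n)))))) =
      ENNReal.ofReal (cns n s ^ 2) *
        ENNReal.ofReal ((1 - ‖x‖^2)^(s-1) * (π / Real.sin (π * s))) := by
    intro ω
    have hω : ‖(ω : EuclideanSpace ℝ (Fin n))‖ = 1 := by simp
    have hω' : ‖-(ω : EuclideanSpace ℝ (Fin n))‖ = 1 := by simp
    have hp : |inner ℝ x (ω : EuclideanSpace ℝ (Fin n))| ≤ ‖x‖ := by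
      simpa [hω] using abs_real_inner_le_norm x (ω : EuclideanSpace ℝ (Fin n))
    have hgen : ∀ q : ℝ, |q| ≤ ‖x‖ → r^2 + 2*q*r < 1 - ‖x‖^2 := by
      intro q hq
      have h1 := (le_abs_self q).trans hq
      have h3 : q * r ≤ ‖x‖ * r := mul_le_mul_of_nonneg_right h1 hr.le
      nlinarith [norm_nonneg x]
    have := radial n hn s x _ hω r hr
    have h' := radial n hn s x _ hω' r hr
    rw [inner_neg_right] at h'
    rw [← oneD_sum s r (1 - ‖x‖^2) _ hs hr hP (hgen _ hp) (hgen _ (by rwa [abs_neg])), mul_add,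
      ← this, ← h', ← lintegral_add_left]
    · refine lintegral_congr fun ρ => ?_
      simp only [hf, smul_neg, mul_add]
    · have hpm : Measurable (fun ρ : ℝ => ENNReal.ofReal (ρ^(n-1))) := by fun_prop
      refine hpm.mul ?_
      have hsm : Measurable (fun ρ : ℝ => ρ • (ω : EuclideanSpace ℝ (Fin n))) := by fun_prop
      exact hfm.comp hsm
  have hsin : 0 < Real.sin (π * s) := by
    apply Real.sin_pos_of_pos_of_lt_pi
    · exact mul_pos Real.pi_pos hs.1
    · nlinarith [Real.pi_pos, hs.2]
  have hn0 : (0:ℝ) < n := by exact_mod_cast hn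
  have hG : 0 < Real.Gamma ((n:ℝ)/2) := Real.Gamma_pos_of_pos (by positivity)
  have hval : 2 * ∫⁻ z, f z = 2 * ENNReal.ofReal (uOneMinusS n s x) := by
    rw [h2, polar_lintegral hn (fun z => f z + f (-z)) (hfm.add hfm'), lintegral_congr hinner, lintegral_const,
      Measure.toSphere_apply_univ, finrank_euclideanSpace_fin]
    have : Nonempty (Fin n) := ⟨⟨0, hn⟩⟩
    rw [EuclideanSpace.volume_ball, Fintype.card_fin, ENNReal.ofReal_one, one_pow, one_mul,
      ← ENNReal.ofReal_natCast, ← ENNReal.ofReal_mul (by positivity),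
      ← ENNReal.ofReal_mul (by positivity), ← ENNReal.ofReal_mul (by positivity),
      two_mul, ← ENNReal.ofReal_add (u_nonneg n hn s hs x) (u_nonneg n hn s hs x), ← two_mul]
    congr 1
    rw [uOneMinusS, if_pos hx, Real.Gamma_add_one (by positivity)]
    have e1 : √π ^ n = π ^ ((n:ℝ)/2) := by
      rw [Real.sqrt_eq_rpow, ← Real.rpow_natCast, ← Real.rpow_mul Real.pi_pos.le]
      congr 1; ring
    have e2 : cns n s * (π / Real.sin (π * s)) * (n * (π ^ ((n:ℝ)/2) / ((n:ℝ)/2 * Real.Gamma ((n:ℝ)/2)))) = 2 := by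
      have := Real.rpow_pos_of_pos Real.pi_pos ((n:ℝ)/2)
      rw [cns, Real.rpow_add Real.pi_pos, Real.rpow_one]
      field_simp
    rw [e1]
    linear_combination (cns n s * (1 - ‖x‖^2)^(s-1)) * e2
  exact (ENNReal.mul_right_inj (by norm_num) (by norm_num)).1 hval

/-- `u_{1-s}` satisfies the `s`-mean value property on the open unit ball. -/
theorem uOneMinusS_meanValueProperty (n : ℕ) (hn : 1 ≤ n) (s : ℝ)
    (hs : s ∈ Set.Ioo (0 : ℝ) 1)
    (x : EuclideanSpace ℝ (Fin n)) (hx : ‖x‖ < 1)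
    (r : ℝ) (hr : 0 < r) (hr1 : r < 1 - ‖x‖) :
    MeasureTheory.IntegrableOn (fun y => eta n s r (y - x) * uOneMinusS n s y)
      (Metric.ball x r)ᶜ ∧
    uOneMinusS n s x = ∫ y in (Metric.ball x r)ᶜ, eta n s r (y - x) * uOneMinusS n s y := by
  have hnn : ∀ y, 0 ≤ eta n s r (y - x) * uOneMinusS n s y := fun y =>
    mul_nonneg (eta_nonneg n hn s r hs hr _) (u_nonneg n hn s hs _)
  have hm : Measurable (fun y => eta n s r (y - x) * uOneMinusS n s y) :=
    ((eta_meas n s r).comp (measurable_sub_const x)).mul (u_meas n s)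
  have hL : ∫⁻ y in (Metric.ball x r)ᶜ, ENNReal.ofReal (eta n s r (y - x) * uOneMinusS n s y) =
      ENNReal.ofReal (uOneMinusS n s x) := by
    rw [← lint_value n hn s hs x hx r hr hr1, ← lintegral_indicator Metric.isOpen_ball.measurableSet.compl,
      ← lintegral_add_left_eq_self _ x]
    refine lintegral_congr fun z => ?_
    by_cases hz : x + z ∈ (Metric.ball x r)ᶜ
    · rw [indicator_of_mem hz, add_sub_cancel_left]
    · rw [indicator_of_notMem hz]
      have : ‖z‖ < r := by simpa [Metric.mem_ball, dist_eq_norm] using hz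
      simp [eta, not_lt.2 this.le]
  constructor
  · refine ⟨hm.aestronglyMeasurable, ?_⟩
    rw [hasFiniteIntegral_iff_ofReal (Filter.Eventually.of_forall hnn), hL]
    exact ENNReal.ofReal_lt_top
  · rw [integral_eq_lintegral_of_nonneg_ae (Filter.Eventually.of_forall hnn)
      hm.aestronglyMeasurable, hL, ENNReal.toReal_ofReal (u_nonneg n hn s hs x)]
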